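/- arXiv:2403.19901 — 2 statements merged into one kernel-verified Lean document; each statement's English description precedes it below -/
import Mathlib

section
/- Let L1, C1, Csc > 0, R1, G, Gsc ≥ 0, κ4 > 0, κ5 > 0, x2⋆ > 0, and 0 < u_m ≤ 1. Let x1, x2, x3, x5, u1, u2 : [0,∞) → ℝ with x1, x2, x5 differentiable and x2(t) > 0 for all t, satisfying: L1·x1'(t) = -R1·x1(t) + x5(t) - x2(t)·u1(t), C1·x2'(t) = -G·x2(t) + x1(t)·u1(t) - x3(t)·u2(t), Csc·x5'(t) = -Gsc·x5(t) - x1(t), the control law u1(t) = (1/x2(t))·[x5(t) + κ4·(x1(t) - x1ref(t)) + w(t)] with x1ref(t) := -κ5·(x2(t) - x2⋆) and w(t) := -L1·x1ref'(t) - R1·x1ref(t), the control bounds u_m ≤ u1(t) ≤ 1 and 0 ≤ u2(t) ≤ 1, and suppose |x3(t)| ≤ B3 and |x1(0) - x1ref(0)| ≤ B1 for constants B1, B3 ≥ 0. Then the regulation error x̃2 := x2 - x2⋆ satisfies limsup_{t→∞} |x̃2(t)| ≤ (B1 + B3 + G·x2⋆)/(G + κ5·u_m), and the signals x1 and x5 are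 bounded on [0,∞). -/
/-!
Write `z = x1 + κ5 (x2 - x2s)` for the current error and `e = x2 - x2s` for the voltage error.
Substituting the control law into the first equation cancels everything except
`L1 z' = -(R1 + κ4) z`, so `|z| ≤ |z 0| ≤ B1`. The second equation then reads
`C1 e' = -(G + κ5 u1) e + (z u1 - x3 u2 - G x2s)`, whose forcing term is at most
`Φ = B1 + B3 + G x2s` in absolute value. As `u1 ≥ um`, outside the band
`|e| ≤ M = Φ / (G + κ5 um)` the excess `|e| - M` decays at least at the rate
`(G + κ5 um) / C1`, which gives the ultimate bound on `e`.

Boundedness of `x1 = z - κ5 e` follows. The third equation does not bound `x5` when `Gsc = 0`;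
instead the control law is solved for `x5`: with `u1 ≤ 1`, `x5` is a combination of the bounded
quantities `x2 u1`, `z`, `x2'` and `e`.
-/

/-- Exponential approach to a level `M`: if `f` decreases at rate at least `a (f - M)` whenever it
exceeds `M`, then `f` stays below `M + D exp (-(a / 2) t)`. Halving the rate makes the comparison
of derivatives at a contact point strict. -/
lemma le_level_add_exp {f : ℝ → ℝ} {a M D : ℝ} (ha : 0 < a) (hD : 0 < D) (h0 : f 0 ≤ M + D)
    (hf : ∀ t, 0 ≤ t → DifferentiableAt ℝ f t)
    (hf' : ∀ t, 0 ≤ t → M < f t → deriv f t ≤ -a * (f t - M)) (t : ℝ) (ht : 0 ≤ t) :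
    f t ≤ M + D * Real.exp (-(a / 2) * t) := by
  have hB : ∀ x, HasDerivAt (fun s => M + D * Real.exp (-(a / 2) * s))
      (D * (Real.exp (-(a / 2) * x) * -(a / 2))) x := by
    intro x
    have h1 : HasDerivAt (fun s : ℝ => -(a / 2) * s) (-(a / 2)) x := by
      simpa using (hasDerivAt_id x).const_mul (-(a / 2))
    exact (h1.exp.const_mul D).const_add M
  refine image_le_of_deriv_right_lt_deriv_boundary (f := f) (f' := deriv f) (a := 0) (b := t)
    (fun x hx => (hf x hx.1).continuousAt.continuousWithinAt)
    (fun x hx => (hf x hx.1).hasDerivAt.hasDerivWithinAt)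
    (by simpa using h0) hB ?_ ⟨ht, le_rfl⟩
  intro x hx hxe
  have hp : 0 < D * Real.exp (-(a / 2) * x) := by positivity
  have h := hf' x hx.1 (by linarith)
  have hxe' : f x - M = D * Real.exp (-(a / 2) * x) := by linarith
  rw [hxe'] at h
  have := mul_pos ha hp
  nlinarith

/-- Two-sided version of `le_level_add_exp`. -/
lemma abs_le_level_add_exp {f : ℝ → ℝ} {a M D : ℝ} (ha : 0 < a) (hD : 0 < D)
    (h0 : |f 0| ≤ M + D) (hf : ∀ t, 0 ≤ t → DifferentiableAt ℝ f t)
    (hpos : ∀ t, 0 ≤ t → M < f t → deriv f t ≤ -a * (f t - M))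
    (hneg : ∀ t, 0 ≤ t → M < -f t → -deriv f t ≤ -a * (-f t - M)) (t : ℝ) (ht : 0 ≤ t) :
    |f t| ≤ M + D * Real.exp (-(a / 2) * t) := by
  obtain ⟨h1, h2⟩ := abs_le.1 h0
  refine abs_le'.2 ⟨le_level_add_exp ha hD h2 hf hpos t ht, ?_⟩
  refine le_level_add_exp (f := fun s => -f s) ha hD (by linarith) (fun s hs => (hf s hs).neg)
    (fun s hs hs' => ?_) t ht
  rw [deriv.fun_neg]
  exact hneg s hs hs'


/-- Lemma 3: under the Σ2 control law with bounded duty cycles and bounded `x3`,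
the voltage error `x̃2 = x2 - x2⋆` is ultimately bounded by
`(B1 + B3 + G·x2⋆)/(G + κ5·u_m)`, and `x1`, `x5` remain bounded. -/
theorem stmt_15
    (L1 C1 Csc R1 G Gsc κ4 κ5 x2s um B1 B3 : ℝ)
    (hL1 : 0 < L1) (hC1 : 0 < C1) (hCsc : 0 < Csc)
    (hR1 : 0 ≤ R1) (hG : 0 ≤ G) (hGsc : 0 ≤ Gsc)
    (hκ4 : 0 < κ4) (hκ5 : 0 < κ5) (hx2s : 0 < x2s)
    (hum : 0 < um) (hum1 : um ≤ 1) (hB1 : 0 ≤ B1) (hB3 : 0 ≤ B3)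
    (x1 x2 x3 x5 u1 u2 : ℝ → ℝ)
    (hd1 : ∀ t, 0 ≤ t → DifferentiableAt ℝ x1 t)
    (hd2 : ∀ t, 0 ≤ t → DifferentiableAt ℝ x2 t)
    (hd5 : ∀ t, 0 ≤ t → DifferentiableAt ℝ x5 t)
    (hx2pos : ∀ t, 0 ≤ t → 0 < x2 t)
    (hode1 : ∀ t, 0 ≤ t → L1 * deriv x1 t = -R1 * x1 t + x5 t - x2 t * u1 t)
    (hode2 : ∀ t, 0 ≤ t →
      C1 * deriv x2 t = -G * x2 t + x1 t * u1 t - x3 t * u2 t)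
    (hode5 : ∀ t, 0 ≤ t → Csc * deriv x5 t = -Gsc * x5 t - x1 t)
    (hu1law : ∀ t, 0 ≤ t →
      u1 t = (1 / x2 t) * (x5 t + κ4 * (x1 t - (-κ5 * (x2 t - x2s)))
        + (-L1 * deriv (fun s => -κ5 * (x2 s - x2s)) t
            - R1 * (-κ5 * (x2 t - x2s)))))
    (hu1b : ∀ t, 0 ≤ t → um ≤ u1 t ∧ u1 t ≤ 1)
    (hu2b : ∀ t, 0 ≤ t → 0 ≤ u2 t ∧ u2 t ≤ 1)
    (hx3b : ∀ t, 0 ≤ t → |x3 t| ≤ B3)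
    (hx10 : |x1 0 - (-κ5 * (x2 0 - x2s))| ≤ B1) :
    (∀ ε > 0, ∃ T : ℝ, 0 ≤ T ∧ ∀ t, T ≤ t →
      |x2 t - x2s| ≤ (B1 + B3 + G * x2s) / (G + κ5 * um) + ε) ∧
    (∃ K : ℝ, ∀ t, 0 ≤ t → |x1 t| ≤ K) ∧
    (∃ K : ℝ, ∀ t, 0 ≤ t → |x5 t| ≤ K) := by
  have hdref : ∀ t, 0 ≤ t → deriv (fun s => -κ5 * (x2 s - x2s)) t = -κ5 * deriv x2 t := by
    intro t ht
    exact (((hd2 t ht).hasDerivAt.sub_const x2s).const_mul (-κ5)).deriv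
  have hlaw : ∀ t, 0 ≤ t → x2 t * u1 t = x5 t + κ4 * (x1 t + κ5 * (x2 t - x2s))
      + L1 * κ5 * deriv x2 t + R1 * κ5 * (x2 t - x2s) := by
    intro t ht
    have hne := (hx2pos t ht).ne'
    rw [hu1law t ht, hdref t ht]
    field_simp
    ring
  set z : ℝ → ℝ := fun t => x1 t + κ5 * (x2 t - x2s) with hz
  set e : ℝ → ℝ := fun t => x2 t - x2s with he
  have hzd : ∀ t, 0 ≤ t → HasDerivAt z (-((R1 + κ4) / L1) * z t) t := by
    intro t ht
    have h := (hd1 t ht).hasDerivAt.add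
      (((hd2 t ht).hasDerivAt.sub_const x2s).const_mul κ5)
    refine h.congr_deriv ?_
    have h1 := hode1 t ht
    have h2 := hlaw t ht
    simp only [hz]
    field_simp
    linarith
  have hed : ∀ t, 0 ≤ t → HasDerivAt e (deriv x2 t) t := fun t ht =>
    (hd2 t ht).hasDerivAt.sub_const x2s
  have ha1 : 0 < (R1 + κ4) / L1 := by positivity
  have hzb : ∀ t, 0 ≤ t → |z t| ≤ B1 := by
    intro t ht
    refine le_of_forall_pos_le_add fun D hD => ?_
    have h0 : |z 0| ≤ B1 + D := by
      have : z 0 = x1 0 - (-κ5 * (x2 0 - x2s)) := by simp only [hz]; ring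
      rw [this]; linarith
    refine (abs_le_level_add_exp ha1 hD h0 (fun s hs => (hzd s hs).differentiableAt)
      (fun s hs _ => ?_) (fun s hs _ => ?_) t ht).trans ?_
    · rw [(hzd s hs).deriv]
      nlinarith [mul_nonneg ha1.le hB1]
    · rw [(hzd s hs).deriv]
      nlinarith [mul_nonneg ha1.le hB1]
    · have : Real.exp (-((R1 + κ4) / L1 / 2) * t) ≤ 1 := by
        apply Real.exp_le_one_iff.2
        have : 0 ≤ (R1 + κ4) / L1 / 2 * t := by positivity
        linarith
      nlinarith
  have hα : 0 < G + κ5 * um := by positivity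
  set Φ : ℝ := B1 + B3 + G * x2s with hΦ
  have hΦ0 : 0 ≤ Φ := by positivity
  set M : ℝ := Φ / (G + κ5 * um) with hM
  have hM0 : 0 ≤ M := by positivity
  have hMα : (G + κ5 * um) * M = Φ := by rw [hM]; field_simp
  have ha2 : 0 < (G + κ5 * um) / C1 := by positivity
  have hforce : ∀ t, 0 ≤ t → |z t * u1 t - x3 t * u2 t - G * x2s| ≤ Φ := by
    intro t ht
    have hu1 : |u1 t| ≤ 1 := abs_le.2 ⟨by linarith [(hu1b t ht).1], (hu1b t ht).2⟩
    have hu2 : |u2 t| ≤ 1 := abs_le.2 ⟨by linarith [(hu2b t ht).1], (hu2b t ht).2⟩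
    have h1 : |z t * u1 t| ≤ B1 * 1 := by
      rw [abs_mul]; exact mul_le_mul (hzb t ht) hu1 (abs_nonneg _) hB1
    have h2 : |x3 t * u2 t| ≤ B3 * 1 := by
      rw [abs_mul]; exact mul_le_mul (hx3b t ht) hu2 (abs_nonneg _) hB3
    have h3 : |G * x2s| = G * x2s := abs_of_nonneg (by positivity)
    have h4 := abs_sub (z t * u1 t - x3 t * u2 t) (G * x2s)
    have h5 := abs_sub (z t * u1 t) (x3 t * u2 t)
    linarith
  have heq : ∀ t, 0 ≤ t → C1 * deriv x2 t
      = -(G + κ5 * u1 t) * e t + (z t * u1 t - x3 t * u2 t - G * x2s) := by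
    intro t ht
    rw [hode2 t ht]
    simp only [hz, he]
    ring
  have heb : ∀ t, 0 ≤ t →
      |e t| ≤ M + (|e 0| + 1) * Real.exp (-((G + κ5 * um) / C1 / 2) * t) := by
    refine abs_le_level_add_exp ha2 (by positivity) (by linarith)
      (fun s hs => (hed s hs).differentiableAt) (fun s hs hs' => ?_) (fun s hs hs' => ?_)
    · rw [(hed s hs).deriv]
      have h1 := heq s hs
      have h2 := (abs_le.1 (hforce s hs)).2
      have h3 : 0 ≤ κ5 * (u1 s - um) * e s :=
        mul_nonneg (mul_nonneg hκ5.le (by linarith [(hu1b s hs).1])) (by linarith)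
      have : C1 * deriv x2 s ≤ -(G + κ5 * um) * (e s - M) := by nlinarith
      calc deriv x2 s ≤ (-(G + κ5 * um) * (e s - M)) / C1 := by
            rw [le_div_iff₀ hC1]; linarith
        _ = _ := by ring
    · rw [(hed s hs).deriv]
      have h1 := heq s hs
      have h2 := (abs_le.1 (hforce s hs)).1
      have h3 : 0 ≤ κ5 * (u1 s - um) * (-e s) :=
        mul_nonneg (mul_nonneg hκ5.le (by linarith [(hu1b s hs).1])) (by linarith)
      have : C1 * -deriv x2 s ≤ -(G + κ5 * um) * (-e s - M) := by nlinarith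
      calc -deriv x2 s ≤ (-(G + κ5 * um) * (-e s - M)) / C1 := by
            rw [le_div_iff₀ hC1]; linarith
        _ = _ := by ring
  obtain ⟨E, hE⟩ : ∃ E : ℝ, ∀ t, 0 ≤ t → |e t| ≤ E := by
    refine ⟨M + (|e 0| + 1), fun t ht => (heb t ht).trans ?_⟩
    have : Real.exp (-((G + κ5 * um) / C1 / 2) * t) ≤ 1 := by
      apply Real.exp_le_one_iff.2
      have : 0 ≤ (G + κ5 * um) / C1 / 2 * t := by positivity
      linarith
    have := mul_le_mul_of_nonneg_left this (by positivity : 0 ≤ |e 0| + 1)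
    linarith
  have hE0 : 0 ≤ E := (abs_nonneg _).trans (hE 0 le_rfl)
  refine ⟨?_, ⟨B1 + κ5 * E, fun t ht => ?_⟩, ?_⟩
  · intro ε hε
    have hlim : Filter.Tendsto
        (fun t => (|e 0| + 1) * Real.exp (-((G + κ5 * um) / C1 / 2) * t))
        Filter.atTop (nhds 0) := by
      have h1 : Filter.Tendsto (fun t : ℝ => -((G + κ5 * um) / C1 / 2) * t)
          Filter.atTop Filter.atBot :=
        Filter.tendsto_id.const_mul_atTop_of_neg (by linarith)
      simpa using (Real.tendsto_exp_atBot.comp h1).const_mul (|e 0| + 1)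
    obtain ⟨T, hT⟩ := Filter.eventually_atTop.1 (hlim.eventually (gt_mem_nhds hε))
    refine ⟨max T 0, le_max_right _ _, fun t ht => ?_⟩
    have h1 := hT t ((le_max_left _ _).trans ht)
    have h2 := heb t ((le_max_right _ _).trans ht)
    simp only [he] at h2 h1
    linarith
  · have h1 : x1 t = z t - κ5 * e t := by simp only [hz, he]; ring
    have h2 : |κ5 * e t| ≤ κ5 * E := by
      rw [abs_mul, abs_of_pos hκ5]
      exact mul_le_mul_of_nonneg_left (hE t ht) hκ5.le
    rw [h1]
    linarith [abs_sub (z t) (κ5 * e t), hzb t ht]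
  · have hd : ∀ t, 0 ≤ t → |deriv x2 t| ≤ ((G + κ5) * E + Φ) / C1 := by
      intro t ht
      rw [le_div_iff₀ hC1]
      have h1 : |-(G + κ5 * u1 t) * e t| ≤ (G + κ5) * E := by
        rw [abs_mul, abs_neg]
        have hu : 0 ≤ u1 t := hum.le.trans (hu1b t ht).1
        rw [abs_of_nonneg (by positivity)]
        refine mul_le_mul ?_ (hE t ht) (abs_nonneg _) (by positivity)
        nlinarith [(hu1b t ht).2]
      have h2 : |deriv x2 t| * C1 = |C1 * deriv x2 t| := by
        rw [abs_mul, abs_of_pos hC1, mul_comm]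
      rw [h2, heq t ht]
      exact (abs_add_le _ _).trans (add_le_add h1 (hforce t ht))
    refine ⟨(E + x2s) + κ4 * B1 + L1 * κ5 * (((G + κ5) * E + Φ) / C1) + R1 * κ5 * E,
      fun t ht => ?_⟩
    have hx5 := hlaw t ht
    have hx2u : |x2 t * u1 t| ≤ E + x2s := by
      have h1 := hx2pos t ht
      have h2 := hu1b t ht
      rw [abs_of_nonneg (mul_nonneg h1.le (by linarith))]
      have h3 : x2 t - x2s ≤ E := (le_abs_self _).trans (hE t ht)
      nlinarith
    have hLκ : 0 ≤ L1 * κ5 := by positivity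
    have hRκ : 0 ≤ R1 * κ5 := by positivity
    obtain ⟨a1, a2⟩ := abs_le.1 hx2u
    obtain ⟨b1, b2⟩ := abs_le.1 (hzb t ht)
    obtain ⟨c1, c2⟩ := abs_le.1 (hd t ht)
    obtain ⟨d1, d2⟩ := abs_le.1 (hE t ht)
    have b1' := mul_le_mul_of_nonneg_left b1 hκ4.le
    have b2' := mul_le_mul_of_nonneg_left b2 hκ4.le
    have c1' := mul_le_mul_of_nonneg_left c1 hLκ
    have c2' := mul_le_mul_of_nonneg_left c2 hLκ
    have d1' := mul_le_mul_of_nonneg_left d1 hRκ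
    have d2' := mul_le_mul_of_nonneg_left d2 hRκ
    simp only [hz, he] at *
    exact abs_le.2 ⟨by linarith, by linarith⟩
end

section
/- Let L1, L2, C1, C2, Csc > 0, R1, R2, G, Gsc ≥ 0, I_L ∈ ℝ, gains κ1, κ2, κ3, κ4 > 0 and κ5 > 0, setpoints x2⋆ > 0 and x4⋆ > 0, and 0 < u_m ≤ 1. Let x1, x2, x3, x4, x5, x3ref : [0,∞) → ℝ be differentiable with x2(t) > 0, satisfying the closed-loop system: L1·x1' = -R1·x1 + x5 - x2·u1, C1·x2' = -G·x2 + x1·u1 - x3·u2, L2·x3' = -R2·x3 - x4 + x2·u2, C2·x4' = x3 - I_L, Csc·x5' = -Gsc·x5 - x1, where x3ref' = -(κ2/C2)·(x3 - I_L) - κ3·(x4 - x4⋆), u2 = (1/x2)·[x4 + R2·x3ref - κ1·(x3 - x3ref) - L2·κ3·(x4 - x4⋆) - (L2·κ2/C2)·(x3 - I_L)], u1 = (1/x2)·[x5 + κ4·(x1 - x1ref) + w] with x1ref := -κ5·(x2 - x2⋆), w := -L1·x1ref' - R1·x1ref, and suppose u_m ≤ u1(t) ≤ 1 and 0 ≤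 u2(t) ≤ 1 for all t. Then: (P1) x4(t) → x4⋆ as t → ∞; (P2) there is a constant Φ_M ≥ 0 with limsup_{t→∞} |x2(t) - x2⋆| ≤ Φ_M/(G + κ5·u_m); and (P4) all the signals x1, x2, x3, x4, x5, x3ref, x1ref remain bounded on [0,∞). -/
open Filter Topology

/-!
Substituting the control laws into the current equations cancels everything except a linear
damping term: both `x3 - x3ref` and `x1 - x1ref` satisfy scalar linear equations `y' = -m y`
with `m > 0`.

The pair `(e, z) = (x4 - x4⋆, x3ref - I_L)` then follows a stable planar linear system driven by
`d = x3 - x3ref`. The function `2κ₃e² + c z² + c (z + κ₂e)²` (with `c = 1/C2`) is a strict Lyapunov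
function for the unforced system, and adding a multiple of `d²` absorbs the forcing, so all three
signals decay exponentially (`sq_le_exp_of_cascade`). This gives the regulation of `x4`, and bounds
`x3` and `x3ref`.

Since `x1 = (x1 - x1ref) - κ5 (x2 - x2⋆)`, the error `x2 - x2⋆` obeys
`C1 e' = -(G + κ5 u1) e + f` with `G + κ5 u1 ≥ G + κ5 u_m` and `|f| ≤ Φ_M`, whence the ultimate
bound (`abs_le_of_damped`). Because `Gsc` may vanish, `x5` is not bounded through its own equation:
the law for `u1` expresses `x5` through `x2 u1`, `x1 - x1ref`, `x2'` and `x1ref`, which are all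
bounded.
-/

/-- Scalar comparison principle: `y' ≤ -k y` on `[0, ∞)` forces `y t ≤ y 0 * exp (-k t)`. -/
lemma le_exp_of_deriv_le {y y' : ℝ → ℝ} {k : ℝ}
    (hy : ∀ t, 0 ≤ t → HasDerivAt y (y' t) t) (hle : ∀ t, 0 ≤ t → y' t ≤ -k * y t) :
    ∀ t, 0 ≤ t → y t ≤ y 0 * Real.exp (-k * t) := by
  have hE : ∀ t, HasDerivAt (fun s => Real.exp (k * s)) (Real.exp (k * t) * k) t := fun t => by
    simpa using ((hasDerivAt_id t).const_mul k).exp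
  have hprod : ∀ t, 0 ≤ t → HasDerivAt (fun s => y s * Real.exp (k * s))
      (y' t * Real.exp (k * t) + y t * (Real.exp (k * t) * k)) t :=
    fun t ht => (hy t ht).mul (hE t)
  have hanti : AntitoneOn (fun s => y s * Real.exp (k * s)) (Set.Ici 0) := by
    apply antitoneOn_of_deriv_nonpos (convex_Ici 0)
    · exact fun t ht => (hprod t ht).continuousAt.continuousWithinAt
    · exact fun t ht =>
        (hprod t (interior_subset ht)).differentiableAt.differentiableWithinAt
    · intro t ht
      have ht0 : 0 ≤ t := interior_subset ht
      rw [(hprod t ht0).deriv]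
      nlinarith [hle t ht0, Real.exp_pos (k * t)]
  intro t ht
  have h : y t * Real.exp (k * t) ≤ y 0 * Real.exp (k * 0) :=
    hanti (Set.mem_Ici.2 le_rfl) (Set.mem_Ici.2 ht) ht
  rw [mul_zero, Real.exp_zero, mul_one] at h
  have hinv : Real.exp (k * t) * Real.exp (-k * t) = 1 := by
    rw [← Real.exp_add]; simp
  calc y t = y t * Real.exp (k * t) * Real.exp (-k * t) := by rw [mul_assoc, hinv, mul_one]
    _ ≤ y 0 * Real.exp (-k * t) := mul_le_mul_of_nonneg_right h (Real.exp_pos _).le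

/-- A scalar equation `y' = -m y` keeps `|y|` below its initial value. -/
lemma abs_le_of_linear {y : ℝ → ℝ} {m : ℝ} (hm : 0 ≤ m)
    (hy : ∀ t, 0 ≤ t → HasDerivAt y (-m * y t) t) : ∀ t, 0 ≤ t → |y t| ≤ |y 0| := by
  intro t ht
  have h := le_exp_of_deriv_le (y := fun s => y s ^ 2) (k := 2 * m)
    (fun s hs => (hy s hs).pow 2) (fun s hs => by norm_num; nlinarith) t ht
  refine sq_le_sq.1 (h.trans (mul_le_of_le_one_right (sq_nonneg _) ?_))
  exact Real.exp_le_one_iff.2 (by nlinarith [mul_nonneg hm ht])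

/-- A bounded forcing `f` of a scalar equation whose time-varying damping `p` is at least `a > 0`
yields a solution bounded by a decaying transient plus `F / a`. -/
lemma abs_le_of_damped {e p f : ℝ → ℝ} {a F : ℝ} (ha : 0 < a) (hF : 0 ≤ F)
    (he : ∀ t, 0 ≤ t → HasDerivAt e (-p t * e t + f t) t)
    (hp : ∀ t, 0 ≤ t → a ≤ p t) (hf : ∀ t, 0 ≤ t → |f t| ≤ F) :
    ∀ t, 0 ≤ t → |e t| ≤ |e 0| * Real.exp (-(a / 2) * t) + F / a := by
  intro t ht
  -- Young's inequality gives `(e²)' ≤ -a e² + F²/a`, so `e² - (F/a)²` decays at rate `a`.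
  have h := le_exp_of_deriv_le (y := fun s => e s ^ 2 - (F / a) ^ 2) (k := a)
    (fun s hs => ((he s hs).pow 2).sub_const _) (fun s hs => by
      have hFa : a * (F / a) = F := by field_simp
      set q := F / a
      have h1 : e s * f s ≤ |e s| * F := by
        calc e s * f s ≤ |e s * f s| := le_abs_self _
          _ = |e s| * |f s| := abs_mul _ _
          _ ≤ |e s| * F := mul_le_mul_of_nonneg_left (hf s hs) (abs_nonneg _)
      have h2 : a * e s ^ 2 ≤ p s * e s ^ 2 :=
        mul_le_mul_of_nonneg_right (hp s hs) (sq_nonneg _)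
      have h3 : 0 ≤ a * (|e s| - q) ^ 2 := by positivity
      have h4 : |e s| ^ 2 = e s ^ 2 := sq_abs _
      have h5 : |e s| * F = a * (|e s| * q) := by rw [← hFa]; ring
      norm_num
      nlinarith) t ht
  beta_reduce at h
  have hexp : Real.exp (-a * t) = Real.exp (-(a / 2) * t) ^ 2 := by
    rw [← Real.exp_nat_mul]; congr 1; push_cast; ring
  have hpos := Real.exp_pos (-(a / 2) * t)
  have hq : 0 ≤ F / a := by positivity
  apply abs_le_of_sq_le_sq' _ (by positivity) |> abs_le.2
  rw [hexp] at h
  have h0 : |e 0| ^ 2 = e 0 ^ 2 := sq_abs _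
  have h6 : 0 ≤ |e 0| * Real.exp (-(a / 2) * t) * (F / a) := by positivity
  have h7 : 0 ≤ (F / a) ^ 2 * Real.exp (-(a / 2) * t) ^ 2 := by positivity
  nlinarith

/-- Exponential decay of the cascade formed by a stable planar linear system in `(e, z)` and the
stable scalar equation that generates its forcing `d`. -/
lemma sq_le_exp_of_cascade {e z d : ℝ → ℝ} {c κ2 κ3 m : ℝ} (hc : 0 < c) (h2 : 0 < κ2)
    (h3 : 0 < κ3) (hm : 0 < m)
    (he : ∀ t, 0 ≤ t → HasDerivAt e (c * (z t + d t)) t)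
    (hz : ∀ t, 0 ≤ t → HasDerivAt z (-κ2 * c * (z t + d t) - κ3 * e t) t)
    (hd : ∀ t, 0 ≤ t → HasDerivAt d (-m * d t) t) :
    ∃ k A : ℝ, 0 < k ∧ 0 ≤ A ∧ ∀ t, 0 ≤ t →
      e t ^ 2 ≤ A * Real.exp (-k * t) ∧ z t ^ 2 ≤ A * Real.exp (-k * t) := by
  -- `M d²` bounds what Young's inequality leaves of the forcing; `N d²` compensates for it.
  obtain ⟨M, hM⟩ : ∃ M, M = 4 * κ3 * c / κ2 + κ2 * c ^ 2 := ⟨_, rfl⟩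
  have hMpos : 0 < M := by rw [hM]; positivity
  obtain ⟨N, hN⟩ : ∃ N, N = M / m := ⟨_, rfl⟩
  have hNpos : 0 < N := by rw [hN]; positivity
  have hNm : m * N = M := by rw [hN]; field_simp
  obtain ⟨k, hk, hk1, hk2, hkm⟩ : ∃ k, 0 < k ∧ k * (2 * κ3 + 2 * c * κ2 ^ 2) ≤ κ2 * κ3 * c ∧
      k * (3 * c) ≤ κ2 * c ^ 2 ∧ k ≤ m := by
    refine ⟨min (κ2 * κ3 * c / (2 * κ3 + 2 * c * κ2 ^ 2)) (min (κ2 * c ^ 2 / (3 * c)) m),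
      by positivity, ?_, ?_, ?_⟩
    · exact (le_div_iff₀ (by positivity)).1 (min_le_left _ _)
    · exact (le_div_iff₀ (by positivity)).1 ((min_le_right _ _).trans (min_le_left _ _))
    · exact (min_le_right _ _).trans (min_le_right _ _)
  obtain ⟨S, hS⟩ : ∃ S : ℝ → ℝ, S = fun t =>
      2 * κ3 * e t ^ 2 + c * z t ^ 2 + c * (z t + κ2 * e t) ^ 2 + N * d t ^ 2 := ⟨_, rfl⟩
  have hSd : ∀ t, 0 ≤ t → HasDerivAt S
      (-2 * κ2 * c ^ 2 * z t ^ 2 - 2 * κ2 * κ3 * c * e t ^ 2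
        + d t * (4 * κ3 * c * e t - 2 * κ2 * c ^ 2 * z t) - 2 * (m * N) * d t ^ 2) t := by
    intro t ht
    rw [hS]
    refine HasDerivAt.congr_deriv ((((((he t ht).pow 2).const_mul (2 * κ3)).add (((hz t ht).pow 2).const_mul c)).add
      ((((hz t ht).add ((he t ht).const_mul κ2)).pow 2).const_mul c)).add
      (((hd t ht).pow 2).const_mul N)) ?_
    norm_num
    ring
  have hdecay := le_exp_of_deriv_le (k := k) hSd (fun t _ => by
    have y1 : 4 * κ3 * c * (e t * d t) ≤ κ2 * κ3 * c * e t ^ 2 + 4 * κ3 * c / κ2 * d t ^ 2 := by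
      have : 0 ≤ κ3 * c / κ2 * (κ2 * e t - 2 * d t) ^ 2 := by positivity
      have h' : κ3 * c / κ2 * (κ2 * e t - 2 * d t) ^ 2 =
        κ2 * κ3 * c * e t ^ 2 + 4 * κ3 * c / κ2 * d t ^ 2 - 4 * κ3 * c * (e t * d t) := by
        field_simp; ring
      linarith
    have y2 : 0 ≤ κ2 * c ^ 2 * (z t + d t) ^ 2 := by positivity
    have y3 : 0 ≤ c * (z t - κ2 * e t) ^ 2 := by positivity
    have y4 := mul_nonneg hk.le y3
    have y5 := mul_le_mul_of_nonneg_right hk1 (sq_nonneg (e t))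
    have y6 := mul_le_mul_of_nonneg_right hk2 (sq_nonneg (z t))
    have y7 : k * N * d t ^ 2 ≤ m * N * d t ^ 2 := by gcongr
    have y8 : (4 * κ3 * c / κ2) * d t ^ 2 + κ2 * c ^ 2 * d t ^ 2 = m * N * d t ^ 2 := by
      rw [hNm, hM]; ring
    simp only [hS]
    linarith)
  have hS0 : 0 ≤ S 0 := by simp only [hS]; positivity
  refine ⟨k, S 0 / (2 * κ3) + S 0 / c, hk, by positivity, fun t ht => ?_⟩
  have hE := Real.exp_pos (-k * t)
  have hb := hdecay t ht
  have n1 : 0 ≤ 2 * κ3 * e t ^ 2 := by positivity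
  have n2 : 0 ≤ c * z t ^ 2 := by positivity
  have n3 : 0 ≤ c * (z t + κ2 * e t) ^ 2 := by positivity
  have n4 : 0 ≤ N * d t ^ 2 := by positivity
  have hSt : S t = 2 * κ3 * e t ^ 2 + c * z t ^ 2 + c * (z t + κ2 * e t) ^ 2 + N * d t ^ 2 := by
    rw [hS]
  have p1 : 0 ≤ S 0 / (2 * κ3) * Real.exp (-k * t) := by positivity
  have p2 : 0 ≤ S 0 / c * Real.exp (-k * t) := by positivity
  constructor
  · have : e t ^ 2 ≤ S 0 * Real.exp (-k * t) / (2 * κ3) :=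
      (le_div_iff₀ (by positivity)).2 (by linarith)
    rw [mul_div_right_comm] at this
    linarith
  · have : z t ^ 2 ≤ S 0 * Real.exp (-k * t) / c :=
      (le_div_iff₀ hc).2 (by linarith)
    rw [mul_div_right_comm] at this
    linarith

lemma tendsto_const_mul_exp_neg (A : ℝ) {k : ℝ} (hk : 0 < k) :
    Tendsto (fun t => A * Real.exp (-k * t)) atTop (𝓝 0) := by
  have h : Tendsto (fun t : ℝ => -k * t) atTop atBot :=
    tendsto_id.const_mul_atTop_of_neg (neg_lt_zero.2 hk)
  simpa using (Real.tendsto_exp_atBot.comp h).const_mul A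

/-- Proposition 1: closed-loop properties of the overall two-stage DC-DC
converter under the proposed controllers: (P1) `x4 → x4⋆`; (P2) `x2 - x2⋆` is
ultimately bounded by `Φ_M / (G + κ5·u_m)`; (P4) all signals remain bounded. -/
theorem stmt_18
    (L1 L2 C1 C2 Csc R1 R2 G Gsc IL κ1 κ2 κ3 κ4 κ5 x2s x4s um : ℝ)
    (hL1 : 0 < L1) (hL2 : 0 < L2) (hC1 : 0 < C1) (hC2 : 0 < C2) (hCsc : 0 < Csc)
    (hR1 : 0 ≤ R1) (hR2 : 0 ≤ R2) (hG : 0 ≤ G) (hGsc : 0 ≤ Gsc)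
    (hκ1 : 0 < κ1) (hκ2 : 0 < κ2) (hκ3 : 0 < κ3) (hκ4 : 0 < κ4) (hκ5 : 0 < κ5)
    (hx2s : 0 < x2s) (hx4s : 0 < x4s) (hum : 0 < um) (hum1 : um ≤ 1)
    (x1 x2 x3 x4 x5 x3ref u1 u2 : ℝ → ℝ)
    (hd1 : ∀ t, 0 ≤ t → DifferentiableAt ℝ x1 t)
    (hd2 : ∀ t, 0 ≤ t → DifferentiableAt ℝ x2 t)
    (hd3 : ∀ t, 0 ≤ t → DifferentiableAt ℝ x3 t)
    (hd4 : ∀ t, 0 ≤ t → DifferentiableAt ℝ x4 t)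
    (hd5 : ∀ t, 0 ≤ t → DifferentiableAt ℝ x5 t)
    (hdref : ∀ t, 0 ≤ t → DifferentiableAt ℝ x3ref t)
    (hx2pos : ∀ t, 0 ≤ t → 0 < x2 t)
    (hode1 : ∀ t, 0 ≤ t → L1 * deriv x1 t = -R1 * x1 t + x5 t - x2 t * u1 t)
    (hode2 : ∀ t, 0 ≤ t →
      C1 * deriv x2 t = -G * x2 t + x1 t * u1 t - x3 t * u2 t)
    (hode3 : ∀ t, 0 ≤ t → L2 * deriv x3 t = -R2 * x3 t - x4 t + x2 t * u2 t)
    (hode4 : ∀ t, 0 ≤ t → C2 * deriv x4 t = x3 t - IL)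
    (hode5 : ∀ t, 0 ≤ t → Csc * deriv x5 t = -Gsc * x5 t - x1 t)
    (href : ∀ t, 0 ≤ t →
      deriv x3ref t = -(κ2 / C2) * (x3 t - IL) - κ3 * (x4 t - x4s))
    (hu2law : ∀ t, 0 ≤ t →
      u2 t = (1 / x2 t) * (x4 t + R2 * x3ref t - κ1 * (x3 t - x3ref t)
        - L2 * κ3 * (x4 t - x4s) - (L2 * κ2 / C2) * (x3 t - IL)))
    (hu1law : ∀ t, 0 ≤ t →
      u1 t = (1 / x2 t) * (x5 t + κ4 * (x1 t - (-κ5 * (x2 t - x2s)))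
        + (-L1 * deriv (fun s => -κ5 * (x2 s - x2s)) t
            - R1 * (-κ5 * (x2 t - x2s)))))
    (hu1b : ∀ t, 0 ≤ t → um ≤ u1 t ∧ u1 t ≤ 1)
    (hu2b : ∀ t, 0 ≤ t → 0 ≤ u2 t ∧ u2 t ≤ 1) :
    -- (P1) asymptotic regulation of x4
    Tendsto x4 atTop (𝓝 x4s) ∧
    -- (P2) ultimate boundedness of the regulation error of x2
    (∃ ΦM : ℝ, 0 ≤ ΦM ∧ ∀ ε > 0, ∃ T : ℝ, 0 ≤ T ∧ ∀ t, T ≤ t →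
      |x2 t - x2s| ≤ ΦM / (G + κ5 * um) + ε) ∧
    -- (P4) all signals remain bounded
    (∃ K : ℝ, ∀ t, 0 ≤ t →
      |x1 t| ≤ K ∧ |x2 t| ≤ K ∧ |x3 t| ≤ K ∧ |x4 t| ≤ K ∧ |x5 t| ≤ K ∧
      |x3ref t| ≤ K ∧ |(-κ5 * (x2 t - x2s))| ≤ K) := by
  have hD {x : ℝ → ℝ} {t : ℝ} (h : DifferentiableAt ℝ x t) : HasDerivAt x (deriv x t) t :=
    h.hasDerivAt
  have hxref : ∀ t, 0 ≤ t →
      HasDerivAt (fun s => -κ5 * (x2 s - x2s)) (-κ5 * deriv x2 t) t :=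
    fun t ht => ((hD (hd2 t ht)).sub_const x2s).const_mul (-κ5)
  have hu2 : ∀ t, 0 ≤ t → x2 t * u2 t = x4 t + R2 * x3ref t - κ1 * (x3 t - x3ref t)
      - L2 * κ3 * (x4 t - x4s) - (L2 * κ2 / C2) * (x3 t - IL) := by
    intro t ht
    have := (hx2pos t ht).ne'
    rw [hu2law t ht, ← mul_assoc, mul_one_div_cancel this, one_mul]
  have hu1 : ∀ t, 0 ≤ t → x2 t * u1 t = x5 t + κ4 * (x1 t - (-κ5 * (x2 t - x2s)))
      + (L1 * κ5 * deriv x2 t - R1 * (-κ5 * (x2 t - x2s))) := by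
    intro t ht
    have := (hx2pos t ht).ne'
    rw [hu1law t ht, (hxref t ht).deriv, ← mul_assoc, mul_one_div_cancel this, one_mul]
    ring
  have ht3 : ∀ t, 0 ≤ t → HasDerivAt (fun s => x3 s - x3ref s)
      (-((R2 + κ1) / L2) * (x3 t - x3ref t)) t := by
    intro t ht
    refine HasDerivAt.congr_deriv ((hD (hd3 t ht)).sub (hD (hdref t ht))) ?_
    have h1 := hode3 t ht
    rw [hu2 t ht] at h1
    have h2 : deriv x3 t = (-(R2 + κ1) * (x3 t - x3ref t)) / L2 + deriv x3ref t := by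
      rw [href t ht]
      field_simp
      field_simp at h1
      linarith
    rw [h2]; ring
  have ht1 : ∀ t, 0 ≤ t → HasDerivAt (fun s => x1 s - (-κ5 * (x2 s - x2s)))
      (-((R1 + κ4) / L1) * (x1 t - (-κ5 * (x2 t - x2s)))) t := by
    intro t ht
    refine HasDerivAt.congr_deriv ((hD (hd1 t ht)).sub (hxref t ht)) ?_
    have h1 := hode1 t ht
    rw [hu1 t ht] at h1
    have h2 : deriv x1 t = (-(R1 + κ4) * (x1 t - (-κ5 * (x2 t - x2s)))) / L1
        + -κ5 * deriv x2 t := by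
      field_simp
      linarith
    rw [h2]; ring
  have he4 : ∀ t, 0 ≤ t → deriv x4 t = 1 / C2 * (x3 t - IL) := by
    intro t ht
    have := hode4 t ht
    field_simp
    linarith
  obtain ⟨k, A, hk, hA, hcas⟩ := sq_le_exp_of_cascade (e := fun s => x4 s - x4s)
    (z := fun s => x3ref s - IL) (d := fun s => x3 s - x3ref s) (c := 1 / C2)
    (m := (R2 + κ1) / L2) (by positivity) hκ2 hκ3 (by positivity)
    (fun t ht => by
      refine HasDerivAt.congr_deriv ((hD (hd4 t ht)).sub_const x4s) ?_
      rw [he4 t ht]; ring)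
    (fun t ht => by
      refine HasDerivAt.congr_deriv ((hD (hdref t ht)).sub_const IL) ?_
      rw [href t ht]; ring) ht3
  have hsq : ∀ {t y : ℝ}, 0 ≤ t → y ^ 2 ≤ A * Real.exp (-k * t) → |y| ≤ A + 1 := by
    intro t y ht hy
    have : Real.exp (-k * t) ≤ 1 := Real.exp_le_one_iff.2 (by nlinarith)
    have h1 : y ^ 2 ≤ A := hy.trans (mul_le_of_le_one_right hA this)
    exact abs_le.2 (abs_le_of_sq_le_sq' (by nlinarith) (by linarith))
  have hb3 := abs_le_of_linear (by positivity) ht3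
  have hb1 := abs_le_of_linear (by positivity) ht1
  beta_reduce at hb3 hb1
  obtain ⟨B3, hB3⟩ : ∃ B, B = |x3 0 - x3ref 0| := ⟨_, rfl⟩
  obtain ⟨B1, hB1⟩ : ∃ B, B = |x1 0 - (-κ5 * (x2 0 - x2s))| := ⟨_, rfl⟩
  rw [← hB3] at hb3
  rw [← hB1] at hb1
  have hB3n : 0 ≤ B3 := hB3 ▸ abs_nonneg _
  have hB1n : 0 ≤ B1 := hB1 ▸ abs_nonneg _
  have hx4 : ∀ t, 0 ≤ t → |x4 t| ≤ A + 1 + x4s := by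
    intro t ht
    have := abs_le.1 (hsq ht (hcas t ht).1)
    exact abs_le.2 ⟨by linarith, by linarith⟩
  have hxr : ∀ t, 0 ≤ t → |x3ref t| ≤ A + 1 + |IL| := by
    intro t ht
    have := abs_le.1 (hsq ht (hcas t ht).2)
    have := neg_abs_le IL
    have := le_abs_self IL
    exact abs_le.2 ⟨by linarith, by linarith⟩
  obtain ⟨M3, hM3⟩ : ∃ M, M = A + 1 + |IL| + B3 := ⟨_, rfl⟩
  have hM3n : 0 ≤ M3 := by rw [hM3]; positivity
  have hx3 : ∀ t, 0 ≤ t → |x3 t| ≤ M3 := by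
    intro t ht
    have := abs_le.1 (hxr t ht)
    have := abs_le.1 (hb3 t ht)
    exact abs_le.2 ⟨by linarith, by linarith⟩
  obtain ⟨Φ, hΦ⟩ : ∃ Φ, Φ = B1 + M3 + G * x2s := ⟨_, rfl⟩
  have hΦn : 0 ≤ Φ := by rw [hΦ]; positivity
  have hmul : ∀ {a u B : ℝ}, |a| ≤ B → 0 ≤ u → u ≤ 1 → |a * u| ≤ B := by
    intro a u B ha h0 h1
    rw [abs_mul, abs_of_nonneg h0]
    exact (mul_le_of_le_one_right (abs_nonneg _) h1).trans ha
  obtain ⟨g, hg⟩ : ∃ g, g = G + κ5 * um := ⟨_, rfl⟩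
  have hgpos : 0 < g := by rw [hg]; positivity
  have hu1n : ∀ t, 0 ≤ t → 0 ≤ u1 t := fun t ht => hum.le.trans (hu1b t ht).1
  have hforce : ∀ t, 0 ≤ t →
      |(x1 t - (-κ5 * (x2 t - x2s))) * u1 t - x3 t * u2 t - G * x2s| ≤ Φ := by
    intro t ht
    have a1 := abs_le.1 (hmul (hb1 t ht) (hu1n t ht) (hu1b t ht).2)
    have a2 := abs_le.1 (hmul (hx3 t ht) (hu2b t ht).1 (hu2b t ht).2)
    have a3 : 0 ≤ G * x2s := by positivity
    exact abs_le.2 ⟨by linarith, by linarith⟩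
  have hx2t := abs_le_of_damped (e := fun s => x2 s - x2s)
    (p := fun t => (G + κ5 * u1 t) / C1)
    (f := fun t => ((x1 t - (-κ5 * (x2 t - x2s))) * u1 t - x3 t * u2 t - G * x2s) / C1)
    (a := g / C1) (F := Φ / C1) (by positivity) (by positivity)
    (fun t ht => by
      refine HasDerivAt.congr_deriv ((hD (hd2 t ht)).sub_const x2s) ?_
      have := hode2 t ht
      field_simp
      linarith)
    (fun t ht => by
      have := (hu1b t ht).1
      rw [hg]
      gcongr)
    (fun t ht => by
      rw [abs_div, abs_of_pos hC1]
      have := hforce t ht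
      gcongr)
  beta_reduce at hx2t
  rw [div_div_div_cancel_right₀ hC1.ne'] at hx2t
  have hrate : 0 < g / C1 / 2 := by positivity
  obtain ⟨M2, hM2⟩ : ∃ M, M = |x2 0 - x2s| + Φ / g := ⟨_, rfl⟩
  have hM2n : 0 ≤ M2 := by rw [hM2]; positivity
  have hx2b : ∀ t, 0 ≤ t → |x2 t - x2s| ≤ M2 := by
    intro t ht
    rw [hM2]
    refine (hx2t t ht).trans (add_le_add_left (mul_le_of_le_one_right (abs_nonneg _) ?_) _)
    exact Real.exp_le_one_iff.2 (by nlinarith)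
  have hx2a : ∀ t, 0 ≤ t → |x2 t| ≤ M2 + x2s := by
    intro t ht
    have := abs_le.1 (hx2b t ht)
    exact abs_le.2 ⟨by linarith, by linarith⟩
  have hxr1 : ∀ t, 0 ≤ t → |(-κ5 * (x2 t - x2s))| ≤ κ5 * M2 := by
    intro t ht
    rw [abs_mul, abs_neg, abs_of_pos hκ5]
    exact mul_le_mul_of_nonneg_left (hx2b t ht) hκ5.le
  obtain ⟨M1, hM1⟩ : ∃ M, M = B1 + κ5 * M2 := ⟨_, rfl⟩
  have hM1n : 0 ≤ M1 := by rw [hM1]; positivity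
  have hx1 : ∀ t, 0 ≤ t → |x1 t| ≤ M1 := by
    intro t ht
    have := abs_le.1 (hxr1 t ht)
    have := abs_le.1 (hb1 t ht)
    exact abs_le.2 ⟨by linarith, by linarith⟩
  have hdx2 : ∀ t, 0 ≤ t → |C1 * deriv x2 t| ≤ G * (M2 + x2s) + M1 + M3 := by
    intro t ht
    rw [hode2 t ht]
    have a1 := abs_le.1 (hmul (hx1 t ht) (hu1n t ht) (hu1b t ht).2)
    have a2 := abs_le.1 (hmul (hx3 t ht) (hu2b t ht).1 (hu2b t ht).2)
    have a3 := abs_le.1 (hx2a t ht)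
    have a4 := mul_le_mul_of_nonneg_left a3.2 hG
    have a5 := mul_le_mul_of_nonneg_left a3.1 hG
    exact abs_le.2 ⟨by linarith, by linarith⟩
  obtain ⟨D, hDef⟩ : ∃ D, D = (G * (M2 + x2s) + M1 + M3) / C1 := ⟨_, rfl⟩
  have hDn : 0 ≤ D := by rw [hDef]; positivity
  have hdx2' : ∀ t, 0 ≤ t → |deriv x2 t| ≤ D := by
    intro t ht
    have := hdx2 t ht
    rw [abs_mul, abs_of_pos hC1] at this
    rw [hDef, le_div_iff₀ hC1]
    linarith
  obtain ⟨M5, hM5⟩ : ∃ M, M = (M2 + x2s) + κ4 * B1 + L1 * κ5 * D + R1 * (κ5 * M2) := ⟨_, rfl⟩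
  have hM5n : 0 ≤ M5 := by rw [hM5]; positivity
  -- The law for `u1` is solved for `x5`, since `u1` and all the other signals are bounded.
  have hx5 : ∀ t, 0 ≤ t → |x5 t| ≤ M5 := by
    intro t ht
    have a0 := hu1 t ht
    have a1 := abs_le.1 (hmul (hx2a t ht) (hu1n t ht) (hu1b t ht).2)
    have b1 := abs_le.1 (hb1 t ht)
    have a2 := mul_le_mul_of_nonneg_left b1.1 hκ4.le
    have a3 := mul_le_mul_of_nonneg_left b1.2 hκ4.le
    have b2 := abs_le.1 (hdx2' t ht)
    have a4 := mul_le_mul_of_nonneg_left b2.1 (mul_pos hL1 hκ5).le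
    have a5 := mul_le_mul_of_nonneg_left b2.2 (mul_pos hL1 hκ5).le
    have b3 := abs_le.1 (hxr1 t ht)
    have a6 := mul_le_mul_of_nonneg_left b3.1 hR1
    have a7 := mul_le_mul_of_nonneg_left b3.2 hR1
    exact abs_le.2 ⟨by linarith, by linarith⟩
  refine ⟨?_, ⟨Φ, hΦn, ?_⟩, ?_⟩
  · have hs : Tendsto (fun t => (x4 t - x4s) ^ 2) atTop (𝓝 0) := by
      refine tendsto_of_tendsto_of_tendsto_of_le_of_le' tendsto_const_nhds
        (tendsto_const_mul_exp_neg A hk) (Eventually.of_forall fun t => sq_nonneg _) ?_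
      filter_upwards [eventually_ge_atTop 0] with t ht using (hcas t ht).1
    have habs : Tendsto (fun t => |x4 t - x4s|) atTop (𝓝 0) := by
      simpa [Real.sqrt_sq_eq_abs] using hs.sqrt
    have h0 := (tendsto_zero_iff_abs_tendsto_zero _).2 habs
    simpa using h0.add_const x4s
  · intro ε hε
    obtain ⟨T, hT⟩ := eventually_atTop.1
      ((tendsto_const_mul_exp_neg |x2 0 - x2s| hrate).eventually (gt_mem_nhds hε))
    refine ⟨max T 0, le_max_right _ _, fun t ht => ?_⟩
    have h1 := hT t ((le_max_left _ _).trans ht)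
    have h2 := hx2t t ((le_max_right _ _).trans ht)
    rw [← hg]
    linarith
  · have hI := abs_nonneg IL
    have hκM : 0 ≤ κ5 * M2 := by positivity
    refine ⟨M1 + (M2 + x2s) + M3 + (A + 1 + x4s) + M5 + (A + 1 + |IL|) + κ5 * M2,
      fun t ht => ⟨?_, ?_, ?_, ?_, ?_, ?_, ?_⟩⟩
    · linarith [hx1 t ht]
    · linarith [hx2a t ht]
    · linarith [hx3 t ht]
    · linarith [hx4 t ht]
    · linarith [hx5 t ht]
    · linarith [hxr t ht]
    · linarith [hxr1 t ht]
end
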